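/- Let X be a geodesic metric space that is δ-hyperbolic (four-point condition) for some δ ≥ 0, let a group G act on X by isometries, and let x = {x_i} be a sequence in X tending to infinity with basepoint x₀ such that for every g ∈ G the sequence {g·x_i} is equivalent to {x_i}. For g ∈ G set q_x(g) = η_x(g·x₀), where η_x(a) = limsup_{n→∞} (d(a,x_n) − d(x₀,x_n)). Then for every g ∈ G the limit p_x(g) = lim_{n→∞} q_x(gⁿ)/n exists, and p_x(g) ≠ 0 if and only if g acts hyperbolically on X, i.e. if and only if the map ℤ → X, k ↦ gᵏ·x₀, is a quasi-isometric embedding. -/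

import Mathlib

open Filter

/-!
Fixing the boundary point makes `q_x` a quasimorphism: a point near infinity computes `q_x` up to a
multiple of `δ`, and an isometry fixing the end moves such points to such points. On the powers
of `g`, homogenization then gives `p_x(g)` with `|q_x(gⁿ) - n p_x(g)|` bounded.

If `p_x(g) ≠ 0`, then `d(gⁿx₀, x₀) ≥ |q_x(gⁿ)|` grows linearly. If `p_x(g) = 0`, all `gⁿx₀` lie
within bounded distance of one horosphere, and the four-point condition for `x₀`, `gⁿx₀`, `g²ⁿx₀`
and the fixed end gives `d(g²ⁿx₀, x₀) ≤ d(gⁿx₀, x₀) + O(δ)`. Hence `d(gⁿx₀, x₀)` grows only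
logarithmically along powers of two, which no quasi-isometric embedding of `ℤ` allows.
-/

section RealSequences

theorem abs_limsup_sub_le {α : Type*} {F : Filter α} [F.NeBot] {f : α → ℝ} {c ε : ℝ}
    (h : ∀ᶠ y in F, |f y - c| ≤ ε) : |limsup f F - c| ≤ ε := by
  have upper : ∀ᶠ y in F, f y ≤ c + ε := h.mono fun y hy ↦ by linarith [(abs_le.1 hy).2]
  have lower : ∀ᶠ y in F, c - ε ≤ f y := h.mono fun y hy ↦ by linarith [(abs_le.1 hy).1]
  have limsup_le : limsup f F ≤ c + ε :=
    limsup_le_of_le (isBoundedUnder_of_eventually_ge lower).isCoboundedUnder_le upper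
  have le_limsup : c - ε ≤ limsup f F :=
    le_limsup_of_frequently_le lower.frequently (isBoundedUnder_of_eventually_le upper)
  rw [abs_sub_le_iff]
  constructor <;> linarith

theorem neg_mul_le_add_of_abs_add_sub_sub_le {a : ℕ → ℝ} {D : ℝ}
    (ha : ∀ i j, |a (i + j) - a i - a j| ≤ D) (n : ℕ) : -(n * (|a 1| + D)) ≤ a n + D := by
  induction n with
  | zero =>
    have h := (abs_le.1 (ha 0 0)).2
    simp only [add_zero, sub_self, zero_sub] at h
    simp only [Nat.cast_zero, zero_mul, neg_zero]
    linarith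
  | succ n ih =>
    push_cast
    linarith [(abs_le.1 (ha n 1)).1, neg_abs_le (a 1)]

theorem exists_tendsto_div_and_mul_le_add {a : ℕ → ℝ} {D : ℝ}
    (ha : ∀ i j, |a (i + j) - a i - a j| ≤ D) :
    ∃ L : ℝ, Tendsto (fun n : ℕ ↦ a n / n) atTop (nhds L) ∧ ∀ n : ℕ, n * L ≤ a n + D := by
  have subadd : Subadditive fun n ↦ a n + D := fun i j ↦ by linarith [(abs_le.1 (ha i j)).2]
  have lower := neg_mul_le_add_of_abs_add_sub_sub_le ha
  have bdd : BddBelow (Set.range fun n : ℕ ↦ (a n + D) / n) := by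
    refine ⟨-(|a 1| + D), Set.forall_mem_range.2 fun n ↦ ?_⟩
    rcases n.eq_zero_or_pos with rfl | hn
    · have : 0 ≤ D := (abs_nonneg _).trans (ha 0 0)
      simp only [Nat.cast_zero, div_zero, Left.neg_nonpos_iff]
      positivity
    · rw [le_div_iff₀ (by positivity)]
      linarith [lower n]
  refine ⟨subadd.lim, ?_, fun n ↦ ?_⟩
  · have h := (subadd.tendsto_lim bdd).sub (tendsto_const_div_atTop_nhds_zero_nat D)
    rw [sub_zero] at h
    exact h.congr fun n ↦ by ring
  · rcases n.eq_zero_or_pos with rfl | hn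
    · simpa using lower 0
    · have h := subadd.lim_le_div bdd hn.ne'
      rw [le_div_iff₀ (by positivity)] at h
      linarith

theorem exists_tendsto_div_and_abs_sub_le {a : ℕ → ℝ} {D : ℝ}
    (ha : ∀ i j, |a (i + j) - a i - a j| ≤ D) :
    ∃ L : ℝ, Tendsto (fun n : ℕ ↦ a n / n) atTop (nhds L) ∧ ∀ n : ℕ, |a n - n * L| ≤ D := by
  have ha_neg (i j) : |-a (i + j) - -a i - -a j| ≤ D := by
    rw [← abs_neg]
    convert ha i j using 2
    ring
  obtain ⟨L, hL, L_le⟩ := exists_tendsto_div_and_mul_le_add ha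
  obtain ⟨M, hM, M_le⟩ := exists_tendsto_div_and_mul_le_add (a := fun n ↦ -a n) ha_neg
  obtain rfl : M = -L := tendsto_nhds_unique hM (hL.neg.congr fun n ↦ (neg_div _ _).symm)
  refine ⟨L, hL, fun n ↦ abs_le.2 ⟨?_, ?_⟩⟩
  · linarith [L_le n]
  · linarith [M_le n]

theorem nonpos_of_mul_le_add_of_apply_two_mul_le {a : ℕ → ℝ} {c C E : ℝ}
    (hlin : ∀ n : ℕ, c * n ≤ a n + C) (hdouble : ∀ n, a (2 * n) ≤ a n + E) : c ≤ 0 := by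
  have upper (k : ℕ) : a (2 ^ k) ≤ a 1 + k * E := by
    induction k with
    | zero => simp
    | succ k ih =>
      rw [pow_succ']
      push_cast
      linarith [hdouble (2 ^ k)]
  have c_le (k : ℕ) : c ≤ (a 1 + C) * (k ^ 0 / 2 ^ k) + E * (k ^ 1 / 2 ^ k) := by
    have h := hlin (2 ^ k)
    push_cast at h
    calc c ≤ (a 1 + C + k * E) / 2 ^ k := by
          rw [le_div_iff₀ (by positivity)]
          linarith [upper k]
      _ = _ := by ring
  have lim (m : ℕ) : Tendsto (fun k : ℕ ↦ (k : ℝ) ^ m / 2 ^ k) atTop (nhds 0) :=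
    tendsto_pow_const_div_const_pow_of_one_lt m one_lt_two
  simpa using ge_of_tendsto' (((lim 0).const_mul (a 1 + C)).add ((lim 1).const_mul E)) c_le

end RealSequences

section OrbitGrowth

/-- A `(K, C)`-quasi-isometric embedding. The conditions `1 ≤ K` and `0 ≤ C` are left to its
uses. -/
def IsQuasiIsometricEmbedding {X Y : Type*} [PseudoMetricSpace X] [PseudoMetricSpace Y]
    (K C : ℝ) (f : X → Y) : Prop :=
  ∀ x y, dist x y / K - C ≤ dist (f x) (f y) ∧ dist (f x) (f y) ≤ K * dist x y + C

variable {X : Type*} [PseudoMetricSpace X]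

/-- A hyperbolic isometry, as witnessed by the orbit of the basepoint `o`. -/
def ActsHyperbolically (φ : X ≃ᵢ X) (o : X) : Prop :=
  ∃ K C : ℝ, 1 ≤ K ∧ 0 ≤ C ∧ IsQuasiIsometricEmbedding K C fun k : ℤ ↦ (φ ^ k) o

variable (φ : X ≃ᵢ X) (o : X)

theorem dist_zpow_apply_zpow_apply (k l : ℤ) :
    dist ((φ ^ k) o) ((φ ^ l) o) = dist ((φ ^ (k - l).natAbs) o) o := by
  have shift (l : ℤ) (n : ℕ) : dist ((φ ^ (l + n)) o) ((φ ^ l) o) = dist ((φ ^ n) o) o := by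
    rw [zpow_add, IsometryEquiv.mul_apply, IsometryEquiv.dist_eq, zpow_natCast]
  rcases le_total l k with h | h
  · rw [← shift l, show l + ((k - l).natAbs : ℤ) = k by lia]
  · rw [← shift k, show k + ((k - l).natAbs : ℤ) = l by lia, dist_comm]

theorem dist_pow_apply_le (n : ℕ) : dist ((φ ^ n) o) o ≤ n * dist (φ o) o := by
  induction n with
  | zero => simp
  | succ n ih =>
    calc dist ((φ ^ (n + 1)) o) o
        ≤ dist ((φ ^ n) (φ o)) ((φ ^ n) o) + dist ((φ ^ n) o) o := by
          rw [pow_succ, IsometryEquiv.mul_apply]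
          exact dist_triangle _ _ _
      _ ≤ dist (φ o) o + n * dist (φ o) o := by
          rw [IsometryEquiv.dist_eq]
          gcongr
      _ = _ := by
          push_cast
          ring

theorem actsHyperbolically_iff_exists_mul_le :
    ActsHyperbolically φ o ↔
      ∃ c > 0, ∃ C : ℝ, ∀ n : ℕ, c * n ≤ dist ((φ ^ n) o) o + C := by
  constructor
  · rintro ⟨K, C, hK, -, h⟩
    refine ⟨K⁻¹, by positivity, C, fun n ↦ ?_⟩
    have := (h n 0).1
    simp only [dist_zpow_apply_zpow_apply, Int.dist_eq, sub_zero, Int.natAbs_natCast,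
      Int.cast_natCast, Int.cast_zero, Nat.abs_cast] at this
    rw [inv_mul_eq_div]
    linarith
  · rintro ⟨c, hc, C, h⟩
    refine ⟨1 + dist (φ o) o + c⁻¹, |C|, ?_, abs_nonneg C, fun k l ↦ ?_⟩
    · have : 0 ≤ dist (φ o) o + c⁻¹ := by positivity
      linarith
    have dist_kl : dist k l = (k - l).natAbs := by
      rw [Int.dist_eq, Nat.cast_natAbs, Int.cast_abs, Int.cast_sub]
    rw [dist_zpow_apply_zpow_apply, dist_kl]
    generalize (k - l).natAbs = n
    constructor
    · have : n / (1 + dist (φ o) o + c⁻¹) ≤ c * n :=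
        calc n / (1 + dist (φ o) o + c⁻¹) ≤ n / c⁻¹ := by
              gcongr
              exact le_add_of_nonneg_left (by positivity)
          _ = c * n := by rw [div_inv_eq_mul, mul_comm]
      linarith [h n, le_abs_self C]
    · calc dist ((φ ^ n) o) o ≤ n * dist (φ o) o := dist_pow_apply_le φ o n
        _ ≤ (1 + dist (φ o) o + c⁻¹) * n := by
          rw [mul_comm]
          gcongr
          linarith [inv_pos.2 hc]
        _ ≤ _ := le_add_of_nonneg_right (abs_nonneg C)

end OrbitGrowth

section GromovHyperbolic

variable {X : Type*} [PseudoMetricSpace X]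

/-- The four-point condition for `δ`-hyperbolicity. -/
def IsGromovHyperbolic (X : Type*) [PseudoMetricSpace X] (δ : ℝ) : Prop :=
  ∀ p₁ p₂ p₃ p₄ : X,
    dist p₁ p₄ + dist p₂ p₃ ≤
      max (dist p₁ p₂ + dist p₃ p₄) (dist p₁ p₃ + dist p₂ p₄) + 2 * δ

/-- The Gromov product `(x, y)_o`; the basepoint is the first argument. -/
noncomputable def gromovProduct (o x y : X) : ℝ :=
  (dist x o + dist y o - dist x y) / 2

/-- Two filters on `X` are equivalent at infinity if the Gromov product tends to `∞` along them.
A sequence `x` is encoded by the filter `atTop.map x`, so that equivalence of sequences is the case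
of two such filters, and `EquivAtInfinity o F F` says that `F` tends to infinity. -/
def EquivAtInfinity (o : X) (F G : Filter X) : Prop :=
  Tendsto (fun p : X × X ↦ gromovProduct o p.1 p.2) (F ×ˢ G) atTop

/-- The quasi-horofunction `η` of a filter, normalised to vanish at `o`. -/
noncomputable def quasiHorofunction (o : X) (F : Filter X) (a : X) : ℝ :=
  limsup (fun y ↦ dist a y - dist o y) F

theorem gromovProduct_comm (o x y : X) : gromovProduct o x y = gromovProduct o y x := by
  rw [gromovProduct, gromovProduct, dist_comm x y, add_comm (dist x o)]

theorem gromovProduct_sub_dist_le (o o' x y : X) :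
    gromovProduct o x y - dist o o' ≤ gromovProduct o' x y := by
  unfold gromovProduct
  linarith [dist_triangle_right x o o', dist_triangle_right y o o']

theorem gromovProduct_map {ψ : X → X} (hψ : Isometry ψ) (o x y : X) :
    gromovProduct (ψ o) (ψ x) (ψ y) = gromovProduct o x y := by
  simp only [gromovProduct, hψ.dist_eq]

theorem IsGromovHyperbolic.min_gromovProduct_le {δ : ℝ} (hX : IsGromovHyperbolic X δ)
    (o x y z : X) : min (gromovProduct o x y) (gromovProduct o y z) ≤ gromovProduct o x z + δ := by
  have h := hX x y o z
  rw [dist_comm o z] at h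
  unfold gromovProduct
  grind

namespace EquivAtInfinity

variable {δ : ℝ} {o : X} {F G H : Filter X}

theorem map_atTop_iff {ι κ : Type*} [Preorder ι] [Preorder κ] {x : ι → X} {y : κ → X} :
    EquivAtInfinity o (atTop.map x) (atTop.map y) ↔
      Tendsto (fun p : ι × κ ↦ gromovProduct o (x p.1) (y p.2)) atTop atTop := by
  rw [EquivAtInfinity, prod_map_map_eq, prod_atTop_atTop_eq, tendsto_map'_iff]
  rfl

theorem symm (h : EquivAtInfinity o F G) : EquivAtInfinity o G F :=
  (Tendsto.comp h tendsto_prod_swap).congr fun _ ↦ gromovProduct_comm _ _ _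

theorem trans [G.NeBot] (hX : IsGromovHyperbolic X δ) (hFG : EquivAtInfinity o F G)
    (hGH : EquivAtInfinity o G H) : EquivAtInfinity o F H := by
  refine tendsto_atTop.2 fun B ↦ ?_
  obtain ⟨p, hp, q, hq, hpq⟩ := eventually_prod_iff.1 (tendsto_atTop.1 hFG (B + δ))
  obtain ⟨q', hq', r, hr, hqr⟩ := eventually_prod_iff.1 (tendsto_atTop.1 hGH (B + δ))
  obtain ⟨v, hv, hv'⟩ := (hq.and hq').exists
  filter_upwards [hp.prod_mk hr] with ⟨u, w⟩ ⟨hu, hw⟩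
  linarith [hX.min_gromovProduct_le o u v w, le_min (hpq hu hv) (hqr hv' hw)]

theorem self_left [G.NeBot] (hX : IsGromovHyperbolic X δ) (h : EquivAtInfinity o F G) :
    EquivAtInfinity o F F :=
  h.trans hX h.symm

theorem map {ψ : X → X} (hψ : Isometry ψ) (h : EquivAtInfinity o F G) :
    EquivAtInfinity o (F.map ψ) (G.map ψ) := by
  rw [EquivAtInfinity, prod_map_map_eq, tendsto_map'_iff]
  refine tendsto_atTop_mono (fun p ↦ ?_) (tendsto_atTop_add_const_right _ (-dist (ψ o) o) h)
  rw [← gromovProduct_map hψ, ← sub_eq_add_neg]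
  exact gromovProduct_sub_dist_le _ _ _ _

theorem map_pow [F.NeBot] (hX : IsGromovHyperbolic X δ) {φ : X ≃ᵢ X}
    (h : EquivAtInfinity o F (F.map φ)) (n : ℕ) : EquivAtInfinity o F (F.map (φ ^ n : X ≃ᵢ X)) := by
  induction n with
  | zero => simpa using h.self_left hX
  | succ n ih =>
    rw [pow_succ', IsometryEquiv.coe_mul, ← Filter.map_map]
    exact h.trans hX (ih.map φ.isometry)

/-- For `u`, `v` close to the boundary point, `d(a, b) + d(u, v)` is the smallest of the three
sums in the four-point condition, so the other two differ by at most `2δ`. -/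
theorem eventually_abs_dist_sub_dist_sub_le (hX : IsGromovHyperbolic X δ)
    (h : EquivAtInfinity o F G) (a b : X) :
    ∀ᶠ p : X × X in F ×ˢ G,
      |(dist a p.1 - dist b p.1) - (dist a p.2 - dist b p.2)| ≤ 2 * δ := by
  filter_upwards [h.eventually_ge_atTop (dist a o + dist b o)] with ⟨u, v⟩ huv
  unfold gromovProduct at huv
  have hau := dist_triangle_left u o a
  have hav := dist_triangle_left v o a
  have hbu := dist_triangle_left u o b
  have hbv := dist_triangle_left v o b
  have hab := dist_triangle_right a b o
  have h₁ := hX a b u v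
  have h₂ := hX a b v u
  rw [dist_comm v u] at h₂
  rw [max_eq_right (by linarith)] at h₁ h₂
  rw [abs_sub_le_iff]
  constructor <;> linarith

end EquivAtInfinity

section QuasiHorofunction

variable {δ : ℝ} {o : X} {F : Filter X} [F.NeBot]

variable (o F) in
theorem abs_quasiHorofunction_le (a : X) : |quasiHorofunction o F a| ≤ dist a o := by
  rw [← sub_zero (quasiHorofunction o F a)]
  refine abs_limsup_sub_le (Eventually.of_forall fun y ↦ ?_)
  rw [sub_zero]
  exact abs_dist_sub_le a o y

variable (o F) in
theorem quasiHorofunction_self : quasiHorofunction o F o = 0 := by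
  simpa using abs_quasiHorofunction_le o F o

theorem eventually_abs_quasiHorofunction_sub_le (hX : IsGromovHyperbolic X δ)
    (hF : EquivAtInfinity o F F) (a : X) :
    ∀ᶠ y in F, |quasiHorofunction o F a - (dist a y - dist o y)| ≤ 2 * δ := by
  filter_upwards [(hF.eventually_abs_dist_sub_dist_sub_le hX a o).curry] with y hy
  exact abs_limsup_sub_le (hy.mono fun z hz ↦ by rwa [abs_sub_comm])

theorem abs_quasiHorofunction_apply_sub_sub_le (hX : IsGromovHyperbolic X δ) {ψ : X → X}
    (hψ : Isometry ψ) (hfix : EquivAtInfinity o F (F.map ψ)) (a : X) :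
    |quasiHorofunction o F (ψ a) - quasiHorofunction o F (ψ o) - quasiHorofunction o F a|
      ≤ 8 * δ := by
  have approx := eventually_abs_quasiHorofunction_sub_le hX (hfix.self_left hX)
  have approx_map : ∀ᶠ v in F.map ψ,
      |quasiHorofunction o F a - (dist (ψ a) v - dist (ψ o) v)| ≤ 2 * δ := by
    simpa only [eventually_map, hψ.dist_eq] using approx a
  obtain ⟨⟨u, v⟩, huv, ⟨hψa, hψo⟩, ha⟩ :=
    ((hfix.eventually_abs_dist_sub_dist_sub_le hX (ψ a) (ψ o)).and
      (((approx (ψ a)).and (approx (ψ o))).prod_mk approx_map)).exists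
  rw [abs_sub_le_iff] at *
  constructor <;> linarith

theorem dist_add_quasiHorofunction_le (hX : IsGromovHyperbolic X δ)
    (hF : EquivAtInfinity o F F) (a b c : X) :
    dist a c + quasiHorofunction o F b ≤
      max (dist a b + quasiHorofunction o F c) (dist b c + quasiHorofunction o F a) + 6 * δ := by
  have approx := eventually_abs_quasiHorofunction_sub_le hX hF
  obtain ⟨y, ha, hb, hc⟩ := ((approx a).and ((approx b).and (approx c))).exists
  have h := hX a b y c
  rw [dist_comm y c] at h
  rw [abs_sub_le_iff] at ha hb hc
  rcases le_max_iff.1 (sub_le_iff_le_add.2 h) with h | h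
  · exact sub_le_iff_le_add.1 (le_max_of_le_left (by linarith))
  · exact sub_le_iff_le_add.1 (le_max_of_le_right (by linarith))

theorem dist_apply_apply_le (hX : IsGromovHyperbolic X δ) (hF : EquivAtInfinity o F F)
    {ψ : X → X} (hψ : Isometry ψ) :
    dist (ψ (ψ o)) o ≤ dist (ψ o) o + max (quasiHorofunction o F (ψ (ψ o))) 0 -
      quasiHorofunction o F (ψ o) + 6 * δ := by
  have h := dist_add_quasiHorofunction_le hX hF o (ψ o) (ψ (ψ o))
  rw [hψ.dist_eq, quasiHorofunction_self, dist_comm o (ψ o), max_add_add_left, dist_comm o] at h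
  linarith

end QuasiHorofunction

end GromovHyperbolic

theorem pseudocharacter_detects_hyperbolics_general {X : Type*} [PseudoMetricSpace X] {δ : ℝ}
    (hX : IsGromovHyperbolic X δ) {o : X} {F : Filter X} [F.NeBot] {φ : X ≃ᵢ X}
    (hfix : EquivAtInfinity o F (F.map φ)) :
    ∃ L : ℝ,
      Tendsto (fun n : ℕ ↦ quasiHorofunction o F ((φ ^ n) o) / n) atTop (nhds L) ∧
      (L ≠ 0 ↔ ActsHyperbolically φ o) := by
  have quasimorphism (i j : ℕ) :
      |quasiHorofunction o F ((φ ^ (i + j)) o) - quasiHorofunction o F ((φ ^ i) o) -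
        quasiHorofunction o F ((φ ^ j) o)| ≤ 8 * δ := by
    rw [pow_add, IsometryEquiv.mul_apply]
    exact abs_quasiHorofunction_apply_sub_sub_le hX (φ ^ i).isometry (hfix.map_pow hX i) _
  obtain ⟨L, hL, near⟩ := exists_tendsto_div_and_abs_sub_le
    (a := fun n ↦ quasiHorofunction o F ((φ ^ n) o)) quasimorphism
  refine ⟨L, hL, ?_⟩
  rw [actsHyperbolically_iff_exists_mul_le]
  constructor
  · refine fun hL₀ ↦ ⟨|L|, abs_pos.2 hL₀, 8 * δ, fun n ↦ ?_⟩
    have h := abs_sub_abs_le_abs_sub (n * L) (quasiHorofunction o F ((φ ^ n) o))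
    rw [abs_sub_comm, abs_mul, Nat.abs_cast] at h
    linarith [near n, abs_quasiHorofunction_le o F ((φ ^ n) o)]
  · rintro ⟨c, hc, C, linear⟩ rfl
    simp only [mul_zero, sub_zero] at near
    refine hc.not_ge (nonpos_of_mul_le_add_of_apply_two_mul_le linear (E := 22 * δ) fun n ↦ ?_)
    have h := dist_apply_apply_le hX (hfix.self_left hX) (φ ^ n).isometry
    rw [← IsometryEquiv.mul_apply, ← pow_add, ← two_mul] at h
    have bound := max_le ((le_abs_self _).trans (near (2 * n))) ((abs_nonneg _).trans (near 0))
    linarith [(abs_le.1 (near n)).1]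

/-- Let `X` be a geodesic δ-hyperbolic space, `G` acting by isometries,
and `{x i}` a sequence tending to infinity whose boundary point is fixed by every `g ∈ G`.
Setting `q_x(g) = η_x(g (x 0))`, the limit `p_x(g) = lim q_x(gⁿ)/n` exists for every `g`,
and `p_x(g) ≠ 0` iff `g` acts hyperbolically (the orbit map `ℤ → X`, `k ↦ gᵏ·x 0`, is a
quasi-isometric embedding). -/
theorem pseudocharacter_detects_hyperbolics
    (X : Type*) [MetricSpace X]
    -- `X` is geodesic
    (hgeo : ∀ a b : X, ∃ f : ℝ → X, f 0 = a ∧ f (dist a b) = b ∧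
      ∀ s ∈ Set.Icc (0 : ℝ) (dist a b), ∀ u ∈ Set.Icc (0 : ℝ) (dist a b),
        dist (f s) (f u) = |s - u|)
    (δ : ℝ) (hδ : 0 ≤ δ)
    (hhyp : ∀ p₁ p₂ p₃ p₄ : X,
      dist p₁ p₄ + dist p₂ p₃ ≤
        max (dist p₁ p₂ + dist p₃ p₄) (dist p₁ p₃ + dist p₂ p₄) + 2 * δ)
    (G : Type*) [Group G] (ρ : G →* (X ≃ᵢ X))
    (x : ℕ → X)
    -- `{x i}` tends to infinity
    (hx : Tendsto
      (fun p : ℕ × ℕ =>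
        (dist (x p.1) (x 0) + dist (x p.2) (x 0) - dist (x p.1) (x p.2)) / 2)
      atTop atTop)
    -- every `g ∈ G` fixes the boundary point of `{x i}`
    (hfix : ∀ g : G, Tendsto
      (fun p : ℕ × ℕ =>
        (dist (x p.1) (x 0) + dist (ρ g (x p.2)) (x 0) - dist (x p.1) (ρ g (x p.2))) / 2)
      atTop atTop)
    (g : G) :
    ∃ L : ℝ,
      Tendsto (fun n : ℕ =>
        (limsup (fun m => dist (ρ (g ^ n) (x 0)) (x m) - dist (x 0) (x m)) atTop) / n)
        atTop (nhds L) ∧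
      (L ≠ 0 ↔ ∃ Kq Cq : ℝ, 1 ≤ Kq ∧ 0 ≤ Cq ∧
        ∀ k l : ℤ, dist k l / Kq - Cq ≤ dist (ρ (g ^ k) (x 0)) (ρ (g ^ l) (x 0)) ∧
          dist (ρ (g ^ k) (x 0)) (ρ (g ^ l) (x 0)) ≤ Kq * dist k l + Cq) := by
  simp only [map_pow, map_zpow]
  exact pseudocharacter_detects_hyperbolics_general (F := atTop.map x) hhyp
    (EquivAtInfinity.map_atTop_iff (y := ρ g ∘ x).2 (hfix g))
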